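/- arXiv:1201.5253 — 3 statements merged into one kernel-verified Lean document; each statement's English description precedes it below -/
import Mathlib

section
/- For every integer n ≥ 0, the determinant of the 2n×2n matrix whose (i,j) entry is (j−i)·S_{i+j−2} for 1 ≤ i,j ≤ 2n equals 2^{2n²}·(∏_{k=0}^{n−1} (4k+1))². -/
/-- The `n`-th large Schröder number `S_n = ∑_{k=0}^{n} (1/(k+1))·C(n+k,2k)·C(2k,k)`. -/
def schroeder (n : ℕ) : ℚ :=
  ∑ k ∈ Finset.range (n + 1),
    (1 / ((k : ℚ) + 1)) * ((n + k).choose (2 * k)) * ((2 * k).choose k)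

/-!
Let `Φ` be the linear functional on polynomials with moments `Φ(X^n) = S_{n+1}`. The entry
`(j - i)·S_{i+j}` is the value of `Φ` at the Wronskian of `X^i` and `X^j`, so the determinant does
not change when the monomials are replaced by another monic basis or when `Φ` is translated.

Centred at `3`, the three-term recurrence of `S_n` says that `Φ` kills `(X² - 8)·f' + 3·X·f` for
every polynomial `f`. This is the Pearson equation characterising the orthogonality functional of
the Dickson polynomials of the second kind `E_n` with parameter `a = 2`, which are rescaled
Chebyshev polynomials `U_n`. With `D_n` the Dickson polynomials of the first kind, for which
`D_{n+1}' = (n + 1)·E_n`, the skew form on the basis `E_0, D_1, E_2, D_3, …` vanishes between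
indices of equal parity and is triangular between indices of opposite parity, with diagonal
`Φ(W(E_{2k}, D_{2k+1})) = (4k + 1)·2^{2k}·Φ(1)`.
-/

section Determinants

open Matrix Polynomial

variable {R : Type*} [CommRing R]

/-- The interleaving of two copies of `Fin n` into the even and the odd positions of
`Fin (2 * n)`; it brings a parity-alternating matrix into block form. -/
noncomputable def evenOddEquiv (n : ℕ) : Fin n ⊕ Fin n ≃ Fin (2 * n) :=
  Equiv.ofBijective (Sum.elim (fun i => ⟨2 * i, by lia⟩) fun i => ⟨2 * i + 1, by lia⟩) <| by
    refine (Fintype.bijective_iff_injective_and_card _).2 ⟨?_, by simp [two_mul]⟩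
    rintro (i | i) (j | j) h <;> simp only [Sum.elim_inl, Sum.elim_inr, Fin.mk.injEq] at h <;>
      grind

@[simp]
theorem evenOddEquiv_inl {n : ℕ} (i : Fin n) : (evenOddEquiv n (.inl i) : ℕ) = 2 * i := rfl

@[simp]
theorem evenOddEquiv_inr {n : ℕ} (i : Fin n) : (evenOddEquiv n (.inr i) : ℕ) = 2 * i + 1 := rfl

theorem det_fromBlocks_zero_neg_transpose {m : Type*} [Fintype m] [DecidableEq m]
    (A : Matrix m m R) : (fromBlocks 0 A (-Aᵀ) 0).det = A.det ^ 2 := by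
  let U : Matrix (m ⊕ m) (m ⊕ m) R := fromBlocks 1 1 0 1
  let V : Matrix (m ⊕ m) (m ⊕ m) R := fromBlocks 1 0 (-1) 1
  have factorization : fromBlocks 0 A (-Aᵀ) 0 = fromBlocks A 0 0 Aᵀ * (U * V * U) := by
    simp [U, V, fromBlocks_multiply]
  have det_U : U.det = 1 := by simp [U]
  have det_V : V.det = 1 := by simp [V]
  rw [factorization, det_mul, det_mul, det_mul, det_U, det_V, det_fromBlocks_zero₂₁,
    det_transpose]
  ring

theorem det_of_skew_of_even_of_odd {w : ℕ → ℕ → R} (skew : ∀ i j, w j i = -w i j)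
    (even : ∀ i j, w (2 * i) (2 * j) = 0) (odd : ∀ i j, w (2 * i + 1) (2 * j + 1) = 0) (n : ℕ) :
    (of fun i j : Fin (2 * n) => w i j).det =
      (of fun i j : Fin n => w (2 * i) (2 * j + 1)).det ^ 2 := by
  rw [← det_fromBlocks_zero_neg_transpose, ← det_submatrix_equiv_self (evenOddEquiv n)]
  congr 1
  ext (i | i) (j | j) <;> simp [even, odd, skew (2 * j) (2 * i + 1)]

theorem det_bilin_of_isMonicOfDegree (B : R[X] →ₗ[R] R[X] →ₗ[R] R) {p : ℕ → R[X]}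
    (hp : ∀ i, IsMonicOfDegree (p i) i) (n : ℕ) :
    (of fun i j : Fin n => B (p i) (p j)).det =
      (of fun i j : Fin n => B (X ^ (i : ℕ)) (X ^ (j : ℕ))).det := by
  let Q : Matrix (Fin n) (Fin n) R := of fun i j => (p j).coeff i
  have det_Q : Q.det = 1 :=
    det_matrixOfPolynomials _ (fun i => (hp i).natDegree_eq) fun i => (hp i).monic
  have expand (j : Fin n) : p j = ∑ i, Q i j • X ^ (i : ℕ) := by
    simp only [Q, of_apply, smul_eq_C_mul]
    rw [Fin.sum_univ_eq_sum_range fun i => C ((p j).coeff i) * X ^ i]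
    exact as_sum_range_C_mul_X_pow' _ ((hp j).natDegree_eq.trans_lt j.2)
  have congruence : (of fun i j : Fin n => B (p i) (p j)) =
      Qᵀ * (of fun i j : Fin n => B (X ^ (i : ℕ)) (X ^ (j : ℕ))) * Q := by
    ext i j
    simp only [of_apply, mul_apply, transpose_apply]
    rw [expand i, expand j]
    simp only [map_sum, map_smul, LinearMap.sum_apply, LinearMap.smul_apply, smul_eq_mul,
      mul_comm]
  rw [congruence, det_mul, det_mul, det_transpose, det_Q, one_mul, mul_one]

end Determinants

section Wronskian

open Polynomial

variable {R : Type*} [CommRing R]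

theorem taylor_wronskian (r : R) (f g : R[X]) :
    taylor r (wronskian f g) = wronskian (taylor r f) (taylor r g) := by
  simp [wronskian, taylor_apply, derivative_comp]

theorem isMonicOfDegree_taylor {p : R[X]} {n : ℕ} (hp : IsMonicOfDegree p n) (r : R) :
    IsMonicOfDegree (taylor r p) n :=
  ⟨(natDegree_taylor p r).trans hp.natDegree_eq, (leadingCoeff_taylor r p).trans hp.monic⟩

theorem det_wronskian_of_isMonicOfDegree (L : R[X] →ₗ[R] R) {p : ℕ → R[X]}
    (hp : ∀ i, IsMonicOfDegree (p i) i) (n : ℕ) :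
    (Matrix.of fun i j : Fin n => L (wronskian (p i) (p j))).det =
      (Matrix.of fun i j : Fin n => L (wronskian (X ^ (i : ℕ)) (X ^ (j : ℕ)))).det :=
  det_bilin_of_isMonicOfDegree ((wronskianBilin R).compr₂ L) hp n

theorem det_wronskian_comp_taylor (L : R[X] →ₗ[R] R) (r : R) (n : ℕ) :
    (Matrix.of fun i j : Fin n => (L ∘ₗ taylor r) (wronskian (X ^ (i : ℕ)) (X ^ (j : ℕ)))).det =
      (Matrix.of fun i j : Fin n => L (wronskian (X ^ (i : ℕ)) (X ^ (j : ℕ)))).det := by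
  nontriviality R
  simp only [LinearMap.comp_apply, taylor_wronskian]
  exact det_wronskian_of_isMonicOfDegree L
    (fun i => isMonicOfDegree_taylor (isMonicOfDegree_X_pow R i) r) n

end Wronskian

section Dickson

open Polynomial

variable {R : Type*} [CommRing R] (a : R)

theorem dickson_second_zero : dickson 2 a 0 = 1 := by
  rw [dickson_zero]
  norm_num

theorem dickson_first_add_two (n : ℕ) :
    dickson 1 a (n + 2) = dickson 2 a (n + 2) - C a * dickson 2 a n := by
  induction n using Nat.twoStepInduction with
  | zero =>
    simp only [zero_add, dickson_add_two, dickson_one, dickson_zero, Nat.cast_one, Nat.cast_ofNat]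
    ring
  | one =>
    simp only [Nat.reduceAdd, dickson_add_two, zero_add, dickson_one, dickson_zero, Nat.cast_one,
      Nat.cast_ofNat]
    ring
  | more n ih₀ ih₁ =>
    rw [dickson_add_two 1 a (n + 2), ih₀, ih₁, dickson_add_two 2 a (n + 2), dickson_add_two 2 a n]
    ring

theorem dickson_second_mul_succ_succ (i j : ℕ) :
    dickson 2 a (i + 1) * dickson 2 a (j + 1) =
      dickson 2 a (i + j + 2) + C a * (dickson 2 a i * dickson 2 a j) := by
  induction i generalizing j with
  | zero =>
    rw [zero_add, zero_add, dickson_one, dickson_second_zero, dickson_add_two]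
    ring
  | succ i ih =>
    have step := ih (j + 1)
    rw [dickson_add_two 2 a j, show i + (j + 1) + 2 = i + 1 + j + 2 by ring] at step
    rw [dickson_add_two 2 a i]
    linear_combination step

theorem derivative_dickson_first_succ (n : ℕ) :
    derivative (dickson 1 a (n + 1)) = ((n + 1 : ℕ) : R[X]) * dickson 2 a n := by
  induction n using Nat.twoStepInduction with
  | zero => simp [dickson_second_zero, -dickson_zero]
  | one => simp [two_mul]
  | more n ih₀ ih₁ =>
    rw [dickson_add_two 1 a (n + 1), derivative_sub, derivative_mul, derivative_C_mul, derivative_X,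
      ih₀, ih₁, dickson_first_add_two, dickson_add_two 2 a n]
    push_cast
    ring

theorem derivative_dickson_second_add_two (n : ℕ) :
    derivative (dickson 2 a (n + 2)) =
      ((n + 2 : ℕ) : R[X]) * dickson 2 a (n + 1) + C a * derivative (dickson 2 a n) := by
  rw [← derivative_dickson_first_succ, dickson_first_add_two, derivative_sub, derivative_C_mul]
  ring

theorem mul_derivative_dickson_second_succ (n : ℕ) :
    (X ^ 2 - 4 * C a) * derivative (dickson 2 a (n + 1)) =
      ((n + 1 : ℕ) : R[X]) * dickson 2 a (n + 2) -
        C a * (((n + 3 : ℕ) : R[X]) * dickson 2 a n) := by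
  induction n using Nat.twoStepInduction with
  | zero =>
    simp only [zero_add, dickson_one, derivative_X, mul_one, Nat.cast_one, dickson_add_two,
      dickson_zero, Nat.cast_ofNat]
    ring
  | one =>
    simp only [Nat.reduceAdd, dickson_add_two, zero_add, dickson_one, dickson_zero, Nat.cast_ofNat,
      derivative_sub, derivative_mul, derivative_X, derivative_C, derivative_ofNat]
    ring
  | more n ih₀ _ =>
    rw [derivative_dickson_second_add_two, mul_add, mul_left_comm _ (C a), ih₀]
    simp only [dickson_add_two]
    push_cast
    ring

theorem isMonicOfDegree_dickson_succ [Nontrivial R] (k n : ℕ) :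
    IsMonicOfDegree (dickson k a (n + 1)) (n + 1) := by
  have natDegree_zero_term : (dickson k a 0).natDegree = 0 := by
    rw [dickson_zero, ← C_ofNat, ← map_natCast C, ← C_sub, natDegree_C]
  induction n using Nat.twoStepInduction with
  | zero => simpa using isMonicOfDegree_X R
  | one =>
    rw [dickson_add_two]
    refine ((isMonicOfDegree_X R).mul (by simpa using isMonicOfDegree_X R)).sub ?_
    exact (natDegree_C_mul_le _ _).trans_lt (by lia)
  | more n ih₀ ih₁ =>
    rw [dickson_add_two, add_comm (n + 1 + 1) 1]
    refine ((isMonicOfDegree_X R).mul ih₁).sub ?_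
    exact (natDegree_C_mul_le _ _).trans_lt (by rw [ih₀.natDegree_eq]; lia)

end Dickson

section Functional

open Polynomial

variable {R : Type*} [CommRing R] {a : R} {L : R[X] →ₗ[R] R}

theorem map_C_mul_eq_mul (L : R[X] →ₗ[R] R) (r : R) (f : R[X]) : L (C r * f) = r * L f := by
  rw [← smul_eq_C_mul, map_smul, smul_eq_mul]

theorem map_natCast_mul_eq_mul (L : R[X] →ₗ[R] R) (n : ℕ) (f : R[X]) :
    L ((n : R[X]) * f) = n * L f := by
  rw [← map_natCast C, map_C_mul_eq_mul]

theorem map_dickson_second_succ_eq_zero [NoZeroDivisors R] [CharZero R]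
    (hL : ∀ f, L ((X ^ 2 - 4 * C a) * derivative f + 3 * (X * f)) = 0) (n : ℕ) :
    L (dickson 2 a (n + 1)) = 0 := by
  have two_step (n : ℕ) :
      ((n + 4 : ℕ) : R) * L (dickson 2 a (n + 2)) = n * (a * L (dickson 2 a n)) := by
    have pearson := hL (dickson 2 a (n + 1))
    have expansion : (X ^ 2 - 4 * C a) * derivative (dickson 2 a (n + 1)) +
        3 * (X * dickson 2 a (n + 1)) =
          ((n + 4 : ℕ) : R[X]) * dickson 2 a (n + 2) - (n : R[X]) * (C a * dickson 2 a n) := by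
      rw [mul_derivative_dickson_second_succ, dickson_add_two]
      push_cast
      ring
    rwa [expansion, map_sub, map_natCast_mul_eq_mul, map_natCast_mul_eq_mul, map_C_mul_eq_mul,
      sub_eq_zero] at pearson
  induction n using Nat.twoStepInduction with
  | zero =>
    have pearson := hL 1
    rw [derivative_one, mul_zero, zero_add, mul_one, ← C_ofNat, map_C_mul_eq_mul] at pearson
    simpa using pearson
  | one => simpa using two_step 0
  | more n ih _ =>
    have vanishing := two_step (n + 1)
    rw [ih, mul_zero, mul_zero] at vanishing
    exact (mul_eq_zero.1 vanishing).resolve_left (Nat.cast_ne_zero.2 (by lia))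

section Orthogonality

variable (hL : ∀ n, L (dickson 2 a (n + 1)) = 0)
include hL

theorem map_dickson_second_mul_add (i d : ℕ) :
    L (dickson 2 a i * dickson 2 a (i + d)) = a ^ i * L (dickson 2 a d) := by
  induction i with
  | zero => simp [dickson_second_zero, -dickson_zero]
  | succ i ih =>
    rw [add_right_comm, dickson_second_mul_succ_succ, map_add, map_C_mul_eq_mul, ih, hL]
    ring

theorem map_dickson_second_mul_self (i : ℕ) :
    L (dickson 2 a i * dickson 2 a i) = a ^ i * L 1 := by
  simpa [dickson_second_zero, -dickson_zero] using map_dickson_second_mul_add hL i 0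

theorem map_dickson_second_mul_of_ne {i j : ℕ} (hij : i ≠ j) :
    L (dickson 2 a i * dickson 2 a j) = 0 := by
  wlog lt : i < j generalizing i j
  · rw [mul_comm]
    exact this hij.symm (by lia)
  obtain ⟨d, rfl⟩ := Nat.exists_eq_add_of_lt lt
  rw [add_assoc, map_dickson_second_mul_add hL, hL, mul_zero]

theorem map_dickson_second_mul_derivative {i j : ℕ} (hij : j ≤ i ∨ Even (i + j)) :
    L (dickson 2 a i * derivative (dickson 2 a j)) = 0 := by
  induction j using Nat.twoStepInduction with
  | zero => simp [dickson_second_zero, -dickson_zero]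
  | one =>
    have ne : i ≠ 0 := by grind
    simpa [dickson_second_zero, -dickson_zero] using map_dickson_second_mul_of_ne hL ne
  | more j ih _ =>
    have ne : i ≠ j + 1 := by grind
    rw [derivative_dickson_second_add_two, mul_add, mul_left_comm, mul_left_comm _ (C a), map_add,
      map_natCast_mul_eq_mul, map_C_mul_eq_mul, map_dickson_second_mul_of_ne hL ne, ih (by grind),
      mul_zero, mul_zero, add_zero]

theorem map_dickson_second_mul_derivative_succ (i : ℕ) :
    L (dickson 2 a i * derivative (dickson 2 a (i + 1))) = (i + 1) * a ^ i * L 1 := by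
  cases i with
  | zero => simp [dickson_second_zero, -dickson_zero]
  | succ i =>
    rw [derivative_dickson_second_add_two, mul_add, mul_left_comm, mul_left_comm _ (C a), map_add,
      map_natCast_mul_eq_mul, map_C_mul_eq_mul, map_dickson_second_mul_self hL,
      map_dickson_second_mul_derivative hL (.inl i.le_succ)]
    push_cast
    ring

theorem map_dickson_first_mul_second {i j : ℕ} (hij : Odd (i + j)) :
    L (dickson 1 a i * dickson 2 a j) = 0 := by
  have second_kind {m : ℕ} (hm : Odd (m + j)) : L (dickson 2 a m * dickson 2 a j) = 0 :=
    map_dickson_second_mul_of_ne hL (by grind)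
  match i with
  | 0 =>
    have two_mul_unit : dickson 1 a 0 = C 2 * dickson 2 a 0 := by
      rw [dickson_zero, dickson_second_zero, C_ofNat]
      norm_num
    rw [two_mul_unit, mul_assoc, map_C_mul_eq_mul, second_kind hij, mul_zero]
  | 1 =>
    rw [dickson_one, ← dickson_one 2 a]
    exact second_kind hij
  | i + 2 =>
    rw [dickson_first_add_two, sub_mul, mul_assoc, map_sub, map_C_mul_eq_mul, second_kind hij,
      second_kind (by grind), mul_zero, sub_zero]

end Orthogonality

end Functional

section SkewBasis

open Polynomial

variable {R : Type*} [CommRing R] {a : R} {L : R[X] →ₗ[R] R}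

/-- The monic basis of `R[X]` alternating between Dickson polynomials of the second kind in even
degrees and of the first kind in odd degrees. It puts the skew form `L (wronskian f g)` into
parity-alternating triangular shape when `L` is the moment functional of the `dickson 2 a`. -/
noncomputable def alternatingDickson (a : R) (i : ℕ) : R[X] :=
  dickson (if Even i then 2 else 1) a i

@[simp]
theorem alternatingDickson_even (a : R) (i : ℕ) :
    alternatingDickson a (2 * i) = dickson 2 a (2 * i) := by
  simp [alternatingDickson]

@[simp]
theorem alternatingDickson_odd (a : R) (i : ℕ) :
    alternatingDickson a (2 * i + 1) = dickson 1 a (2 * i + 1) := by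
  simp [alternatingDickson]

theorem isMonicOfDegree_alternatingDickson [Nontrivial R] (a : R) (i : ℕ) :
    IsMonicOfDegree (alternatingDickson a i) i := by
  cases i with
  | zero => rw [isMonicOfDegree_zero_iff]; exact dickson_second_zero a
  | succ i => exact isMonicOfDegree_dickson_succ a _ i

variable (hL : ∀ n, L (dickson 2 a (n + 1)) = 0)
include hL

theorem map_wronskian_dickson_second_second {i j : ℕ} (hij : Even (i + j)) :
    L (wronskian (dickson 2 a i) (dickson 2 a j)) = 0 := by
  rw [wronskian, map_sub, mul_comm (derivative _),
    map_dickson_second_mul_derivative hL (.inr hij),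
    map_dickson_second_mul_derivative hL (.inr (add_comm i j ▸ hij)), sub_zero]

theorem map_wronskian_dickson_first_first {i j : ℕ} (hij : Even (i + j)) :
    L (wronskian (dickson 1 a (i + 1)) (dickson 1 a (j + 1))) = 0 := by
  rw [wronskian, derivative_dickson_first_succ, derivative_dickson_first_succ, map_sub,
    mul_left_comm, mul_assoc, mul_comm (dickson 2 a i), map_natCast_mul_eq_mul,
    map_natCast_mul_eq_mul, map_dickson_first_mul_second hL (by grind),
    map_dickson_first_mul_second hL (by grind), mul_zero, mul_zero, sub_zero]

theorem map_wronskian_dickson_second_first_of_lt {i j : ℕ} (hij : i < j) :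
    L (wronskian (dickson 2 a i) (dickson 1 a (j + 1))) = 0 := by
  obtain ⟨j, rfl⟩ := Nat.exists_eq_add_one_of_ne_zero (Nat.ne_zero_of_lt hij)
  rw [wronskian, map_sub, derivative_dickson_first_succ, mul_left_comm, map_natCast_mul_eq_mul,
    map_dickson_second_mul_of_ne hL hij.ne, dickson_first_add_two, mul_comm (derivative _), sub_mul,
    mul_assoc, map_sub, map_C_mul_eq_mul, map_dickson_second_mul_derivative hL (.inl (by lia)),
    map_dickson_second_mul_derivative hL (.inl (by lia)), mul_zero, mul_zero, sub_zero, sub_zero]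

theorem map_wronskian_dickson_second_first_succ (i : ℕ) :
    L (wronskian (dickson 2 a i) (dickson 1 a (i + 1))) = (2 * i + 1) * a ^ i * L 1 := by
  rw [wronskian, map_sub, derivative_dickson_first_succ, mul_left_comm, map_natCast_mul_eq_mul,
    map_dickson_second_mul_self hL]
  cases i with
  | zero => simp
  | succ i =>
    rw [dickson_first_add_two, mul_comm (derivative _), sub_mul, mul_assoc, map_sub,
      map_C_mul_eq_mul, map_dickson_second_mul_derivative hL (.inl (by lia)),
      map_dickson_second_mul_derivative_succ hL]
    push_cast
    ring

theorem det_wronskian_moments (n : ℕ) :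
    (Matrix.of fun i j : Fin (2 * n) => L (wronskian (X ^ (i : ℕ)) (X ^ (j : ℕ)))).det =
      (∏ k ∈ Finset.range n, (4 * (k : R) + 1) * a ^ (2 * k) * L 1) ^ 2 := by
  nontriviality R
  have lower_triangular :
      (Matrix.of fun i j : Fin n =>
        L (wronskian (dickson 2 a (2 * i)) (dickson 1 a (2 * j + 1)))).IsLowerTriangular :=
    fun i j (lt : i < j) => map_wronskian_dickson_second_first_of_lt hL (by lia)
  rw [← det_wronskian_of_isMonicOfDegree L (isMonicOfDegree_alternatingDickson a),
    det_of_skew_of_even_of_odd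
      (w := fun i j => L (wronskian (alternatingDickson a i) (alternatingDickson a j)))
      (fun i j => by rw [← map_neg, wronskian_neg_eq])
      (fun i j => by simpa using map_wronskian_dickson_second_second hL (by simp [← mul_add]))
      (fun i j => by simpa using map_wronskian_dickson_first_first hL (by simp [← mul_add]))]
  simp only [alternatingDickson_even, alternatingDickson_odd]
  rw [Matrix.det_of_isLowerTriangular _ lower_triangular, Finset.prod_range]
  congr! 2 with k
  rw [Matrix.of_apply, map_wronskian_dickson_second_first_succ hL]
  push_cast
  ring

end SkewBasis

section Schroeder

open Polynomial

theorem prod_range_pow_two_mul_add_one {M : Type*} [CommMonoid M] (a : M) (n : ℕ) :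
    ∏ k ∈ Finset.range n, a ^ (2 * k + 1) = a ^ n ^ 2 := by
  induction n with
  | zero => simp
  | succ n ih =>
    rw [Finset.prod_range_succ, ih, ← pow_add]
    congr 1
    ring

theorem cast_choose_succ_mul {R : Type*} [CommRing R] (n k : ℕ) :
    (n.choose (k + 1) : R) * (k + 1) = n.choose k * (n - k) := by
  rcases le_or_gt k n with le | lt
  · rw [← Nat.cast_sub le]
    exact mod_cast congrArg (Nat.cast : ℕ → R) (Nat.choose_succ_right_eq n k)
  · simp [Nat.choose_eq_zero_of_lt lt, Nat.choose_eq_zero_of_lt (Nat.lt_succ_of_lt lt)]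

theorem cast_add_one_mul_choose {R : Type*} [CommRing R] (n k : ℕ) :
    ((n : R) + 1) * n.choose k = (n + 1).choose (k + 1) * (k + 1) :=
  mod_cast congrArg (Nat.cast : ℕ → R) (Nat.add_one_mul_choose_eq n k)

theorem cast_catalan_succ {R : Type*} [CommRing R] [NoZeroDivisors R] [CharZero R] (k : ℕ) :
    ((k : R) + 2) * catalan (k + 1) = 2 * (2 * k + 1) * catalan k := by
  have central := Nat.succ_mul_centralBinom_succ k
  rw [← succ_mul_catalan_eq_centralBinom, ← succ_mul_catalan_eq_centralBinom] at central
  have cast_central : ((k : R) + 1) * ((k + 1 + 1) * catalan (k + 1)) =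
      2 * (2 * k + 1) * ((k + 1) * catalan k) := mod_cast central
  exact mul_left_cancel₀ (Nat.cast_add_one_ne_zero k) (by linear_combination cast_central)

/-- The `k`-th term `C(n+k,2k)·Cat_k` of the large Schröder number `S_n`. -/
def schroederTerm (n k : ℕ) : ℚ :=
  (n + k).choose (2 * k) * catalan k

theorem schroederTerm_eq_zero_of_lt {n k : ℕ} (h : n < k) : schroederTerm n k = 0 := by
  simp [schroederTerm, Nat.choose_eq_zero_of_lt (show n + k < 2 * k by lia)]

theorem schroeder_eq_sum_schroederTerm {n m : ℕ} (h : n < m) :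
    schroeder n = ∑ k ∈ Finset.range m, schroederTerm n k := by
  have sum_eq : schroeder n = ∑ k ∈ Finset.range (n + 1), schroederTerm n k := by
    refine Finset.sum_congr rfl fun k _ => ?_
    have central : ((k : ℚ) + 1) * catalan k = (2 * k).choose k :=
      mod_cast succ_mul_catalan_eq_centralBinom k
    rw [schroederTerm, ← central]
    field_simp
  rw [sum_eq]
  refine Finset.sum_subset (by simpa using h) fun k _ hk => schroederTerm_eq_zero_of_lt ?_
  simpa using hk

/-- The Zeilberger certificate of the three-term recurrence of `schroeder`. -/
def schroederCertificate (n k : ℕ) : ℚ :=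
  -(4 * n + 6) * (n + k + 1).choose (2 * k) * catalan k

theorem schroederTerm_recurrence_succ (n k : ℕ) :
    (n + 3) * schroederTerm (n + 2) (k + 1) - 3 * (2 * n + 3) * schroederTerm (n + 1) (k + 1) +
        n * schroederTerm n (k + 1) =
      schroederCertificate n (k + 1) - schroederCertificate n k := by
  have choose_0_1 := cast_choose_succ_mul (R := ℚ) (n + k + 1) (2 * k)
  have choose_0_2 := cast_choose_succ_mul (R := ℚ) (n + k + 1) (2 * k + 1)
  have choose_1_1 := cast_add_one_mul_choose (R := ℚ) (n + k + 1) (2 * k)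
  have choose_1_2 := cast_choose_succ_mul (R := ℚ) (n + k + 2) (2 * k + 1)
  have choose_2_2 := cast_add_one_mul_choose (R := ℚ) (n + k + 2) (2 * k + 1)
  have cat := cast_catalan_succ (R := ℚ) k
  simp only [schroederTerm, schroederCertificate]
  rw [show n + 2 + (k + 1) = n + k + 2 + 1 by ring, show n + 1 + (k + 1) = n + k + 2 by ring,
    show n + (k + 1) + 1 = n + k + 2 by ring, show 2 * (k + 1) = 2 * k + 1 + 1 by ring,
    ← add_assoc n k 1]
  push_cast at choose_0_1 choose_0_2 choose_1_1 choose_1_2 choose_2_2 ⊢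
  rw [← eq_div_iff (by positivity)] at choose_0_1 choose_0_2 choose_1_2
  rw [eq_comm, ← eq_div_iff (by positivity)] at choose_1_1 choose_2_2
  rw [mul_comm, ← eq_div_iff (by positivity)] at cat
  rw [choose_2_2, choose_1_2, choose_1_1, choose_0_2, choose_0_1, cat]
  field_simp
  ring

theorem schroeder_recurrence (n : ℕ) :
    (n + 3) * schroeder (n + 2) - 3 * (2 * n + 3) * schroeder (n + 1) + n * schroeder n = 0 := by
  have initial : (n + 3) * schroederTerm (n + 2) 0 - 3 * (2 * n + 3) * schroederTerm (n + 1) 0 +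
      n * schroederTerm n 0 = schroederCertificate n 0 := by
    simp only [schroederTerm, schroederCertificate, add_zero, mul_zero, Nat.choose_zero_right,
      Nat.cast_one, catalan_zero, mul_one]
    ring
  have final : schroederCertificate n (n + 2) = 0 := by
    have lt : n + (n + 2) + 1 < 2 * (n + 2) := by lia
    simp [schroederCertificate, Nat.choose_eq_zero_of_lt lt]
  rw [schroeder_eq_sum_schroederTerm (show n < n + 2 + 1 by lia),
    schroeder_eq_sum_schroederTerm (show n + 1 < n + 2 + 1 by lia),
    schroeder_eq_sum_schroederTerm (show n + 2 < n + 2 + 1 by lia), Finset.mul_sum, Finset.mul_sum,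
    Finset.mul_sum, ← Finset.sum_sub_distrib, ← Finset.sum_add_distrib, Finset.sum_range_succ',
    initial, Finset.sum_congr rfl fun k _ => schroederTerm_recurrence_succ n k,
    Finset.sum_range_sub, final, zero_sub, neg_add_cancel]

/-- The linear functional with moments `X ^ n ↦ S_{n+1}`. -/
noncomputable def schroederFunctional : ℚ[X] →ₗ[ℚ] ℚ :=
  lsum fun n => LinearMap.lsmul ℚ ℚ (schroeder (n + 1))

theorem schroederFunctional_X_pow (n : ℕ) : schroederFunctional (X ^ n) = schroeder (n + 1) := by
  rw [X_pow_eq_monomial]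
  simp [schroederFunctional, sum_monomial_index]

theorem schroederFunctional_one : schroederFunctional 1 = 2 := by
  rw [← pow_zero X, schroederFunctional_X_pow]
  norm_num [schroeder, Finset.sum_range_succ]

theorem schroederFunctional_X_pow_mul_derivative (i j : ℕ) :
    schroederFunctional (X ^ i * derivative (X ^ j)) = j * schroeder (i + j) := by
  cases j with
  | zero => simp
  | succ j =>
    rw [derivative_X_pow, map_natCast, mul_left_comm, map_natCast_mul_eq_mul, Nat.add_sub_cancel,
      ← pow_add, schroederFunctional_X_pow, add_assoc]

theorem schroederFunctional_wronskian (i j : ℕ) :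
    schroederFunctional (wronskian (X ^ i) (X ^ j)) = (j - i) * schroeder (i + j) := by
  rw [wronskian, map_sub, mul_comm (derivative _), schroederFunctional_X_pow_mul_derivative,
    schroederFunctional_X_pow_mul_derivative, add_comm j i]
  ring

theorem schroederFunctional_pearson (f : ℚ[X]) :
    schroederFunctional (((X - 3) ^ 2 - 8) * derivative f + 3 * ((X - 3) * f)) = 0 := by
  induction f using Polynomial.induction_on' with
  | add p q hp hq =>
    have split : ((X - 3) ^ 2 - 8) * derivative (p + q) + 3 * ((X - 3) * (p + q)) =
        (((X - 3) ^ 2 - 8) * derivative p + 3 * ((X - 3) * p)) +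
          (((X - 3) ^ 2 - 8) * derivative q + 3 * ((X - 3) * q)) := by
      rw [derivative_add]
      ring
    rw [split, map_add, hp, hq, add_zero]
  | monomial n c =>
    have expansion : ((X - 3) ^ 2 - 8) * derivative (monomial n c) + 3 * ((X - 3) * monomial n c) =
        C c * (X ^ 2 * derivative (X ^ n) - C 6 * (X ^ 1 * derivative (X ^ n)) +
          X ^ 0 * derivative (X ^ n) + C 3 * X ^ (n + 1) - C 9 * X ^ n) := by
      rw [← C_mul_X_pow_eq_monomial, derivative_C_mul]
      simp only [C_ofNat]
      ring
    rw [expansion, map_C_mul_eq_mul, map_sub, map_add, map_add, map_sub]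
    simp only [map_C_mul_eq_mul, schroederFunctional_X_pow_mul_derivative,
      schroederFunctional_X_pow]
    rw [add_comm 2 n, add_comm 1 n, zero_add]
    linear_combination c * schroeder_recurrence n

/-- The functional `schroederFunctional` centred at `3`, where its moments become those of a
semicircle law. -/
noncomputable def centredSchroederFunctional : ℚ[X] →ₗ[ℚ] ℚ :=
  schroederFunctional ∘ₗ taylor (-3)

theorem centredSchroederFunctional_one : centredSchroederFunctional 1 = 2 := by
  simp [centredSchroederFunctional, schroederFunctional_one]

theorem centredSchroederFunctional_dickson_succ (n : ℕ) :
    centredSchroederFunctional (dickson 2 2 (n + 1)) = 0 := by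
  refine map_dickson_second_succ_eq_zero (fun f => ?_) n
  have translation : taylor (-3) ((X ^ 2 - 4 * C 2) * derivative f + 3 * (X * f)) =
      ((X - 3) ^ 2 - 8) * derivative (taylor (-3) f) + 3 * ((X - 3) * taylor (-3) f) := by
    simp only [taylor_apply, derivative_comp, add_comp, mul_comp, sub_comp, pow_comp, X_comp,
      ofNat_comp, derivative_add, derivative_X, derivative_neg, derivative_ofNat, C_neg, C_ofNat]
    ring
  rw [centredSchroederFunctional, LinearMap.comp_apply, translation, schroederFunctional_pearson]

end Schroeder

/-- For every integer `n ≥ 0`, the determinant of the `2n × 2n` skew-symmetric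
matrix with entries `(j-i)·S_{i+j-2}` (1-based; here 0-based, so the entry at
`(i,j)` is `(j-i)·S_{i+j}`) equals `2^{2n²}·(∏_{k=0}^{n-1} (4k+1))²`. -/
theorem det_schroeder (n : ℕ) :
    (Matrix.of fun i j : Fin (2 * n) =>
        ((j.val : ℚ) - (i.val : ℚ)) * schroeder (i.val + j.val)).det =
      2 ^ (2 * n ^ 2) * (∏ k ∈ Finset.range n, (4 * (k : ℚ) + 1)) ^ 2 := by
  simp only [← schroederFunctional_wronskian]
  rw [← det_wronskian_comp_taylor schroederFunctional (-3), ← centredSchroederFunctional,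
    det_wronskian_moments centredSchroederFunctional_dickson_succ, centredSchroederFunctional_one]
  have factor (k : ℕ) : (4 * (k : ℚ) + 1) * 2 ^ (2 * k) * 2 = 2 ^ (2 * k + 1) * (4 * k + 1) := by
    ring
  simp only [factor]
  rw [Finset.prod_mul_distrib, prod_range_pow_two_mul_add_one, mul_pow, ← pow_mul, mul_comm 2]
end

section
/- For all integers 1 ≤ i < j, the following identity of rational numbers holds: Σ_{k ≥ 1} (h(i,2k−1)·h(j,2k) − h(i,2k)·h(j,2k−1)) = (j−i)·M_{i+j−3}, where the sum has only finitely many nonzero terms. -/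
/-- The `n`-th Motzkin number `M_n = ∑_{k=0}^{n} (1/(k+1))·C(n,2k)·C(2k,k)`. -/
def motzkin (n : ℕ) : ℚ :=
  ∑ k ∈ Finset.range (n + 1), (1 / ((k : ℚ) + 1)) * (n.choose (2 * k)) * ((2 * k).choose k)

/-- `F(a,c) = ∑_{m=0}^{⌊a/2⌋} C(a,2m)·C(2m,m)/C(c+m,m)`, the terminating
hypergeometric series `₂F₁(-a/2, (1-a)/2; c+1; 4)`. -/
def F (a c : ℕ) : ℚ :=
  ∑ m ∈ Finset.range (a / 2 + 1),
    ((a.choose (2 * m) : ℚ) * ((2 * m).choose m)) / ((c + m).choose m : ℚ)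

/-- The entries (with 1-based indices `i, j ≥ 1`) of the matrix `H`:
`h(i,2k-1) = C(i-1,k-1)·F(i-k,k)` and `h(i,2k) = (i-1)·C(i-2,k-1)·F(i-k-1,k)`.
(When the binomial prefactor vanishes the entry is `0`, so the truncated
natural subtraction in the first argument of `F` is harmless.) -/
def hEnt (i j : ℕ) : ℚ :=
  if j % 2 = 1 then
    ((i - 1).choose ((j + 1) / 2 - 1) : ℚ) * F (i - (j + 1) / 2) ((j + 1) / 2)
  else
    ((i : ℚ) - 1) * ((i - 2).choose (j / 2 - 1) : ℚ) * F (i - j / 2 - 1) (j / 2)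

/-!
Let `J` be the operator `(J u) l = u (l - 1) + u l + u (l + 1)` on sequences vanishing at `-1`.
The entries `h (i, 2k-1)` and `h (i, 2k)` turn out to be `(J^(i-1) δ₀) (k-1)` and
`(i-1) * (J^(i-2) δ₀) (k-1)`, while the Motzkin numbers are the moments `(J^n δ₀) 0`.
Since `J` is symmetric, the sum over `l` of `(J^n δ₀) l * (J^m δ₀) l` is `(J^(n+m) δ₀) 0`. Hence
both halves of the alternating sum are multiples of the single moment `M_{i+j-3}`, with coefficients
`j - 1` and `i - 1`.
-/

section Jacobi

variable {R : Type*} [CommRing R]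

/-- The Jacobi operator on sequences: the symmetric tridiagonal matrix with diagonal `a` and
off-diagonal `b`, the entry `b l` linking the indices `l` and `l + 1`. -/
def jacobiOp (a b u : ℕ → R) : ℕ → R
  | 0 => a 0 * u 0 + b 0 * u 1
  | l + 1 => b l * u l + a (l + 1) * u (l + 1) + b (l + 1) * u (l + 2)

theorem sum_jacobiOp_mul_sub_mul_jacobiOp (a b u v : ℕ → R) (N : ℕ) :
    ∑ l ∈ Finset.range (N + 1), (jacobiOp a b u l * v l - u l * jacobiOp a b v l) =
      b N * (u (N + 1) * v N - u N * v (N + 1)) := by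
  induction N with
  | zero => simp only [zero_add, Finset.sum_range_one, jacobiOp]; ring
  | succ N ih => rw [Finset.sum_range_succ, ih, jacobiOp, jacobiOp]; ring

theorem iterate_jacobiOp_single_eq_zero_of_lt (a b : ℕ → R) {n l : ℕ} (h : n < l) :
    (jacobiOp a b)^[n] (Pi.single 0 1) l = 0 := by
  induction n generalizing l with
  | zero => exact Pi.single_eq_of_ne h.ne' 1
  | succ n ih =>
    obtain ⟨l, rfl⟩ := Nat.exists_eq_succ_of_ne_zero (Nat.ne_zero_of_lt h)
    rw [Function.iterate_succ_apply', jacobiOp, ih (by lia), ih (by lia), ih (by lia)]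
    ring

theorem sum_iterate_jacobiOp_single_mul (a b v : ℕ → R) {n N : ℕ} (h : n ≤ N) :
    ∑ l ∈ Finset.range (N + 1), (jacobiOp a b)^[n] (Pi.single 0 1) l * v l =
      (jacobiOp a b)^[n] v 0 := by
  induction n generalizing v with
  | zero => simp [Pi.single_apply]
  | succ n ih =>
    have hsymm := sum_jacobiOp_mul_sub_mul_jacobiOp a b ((jacobiOp a b)^[n] (Pi.single 0 1)) v N
    rw [iterate_jacobiOp_single_eq_zero_of_lt a b (show n < N + 1 by lia),
      iterate_jacobiOp_single_eq_zero_of_lt a b (show n < N by lia), zero_mul, zero_mul, sub_zero,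
      mul_zero, Finset.sum_sub_distrib, sub_eq_zero] at hsymm
    rw [Function.iterate_succ_apply', Function.iterate_succ_apply, hsymm]
    exact ih _ (by lia)

end Jacobi

/-- The Motzkin triangle: the number of `n`-step paths from `0` to `l` in `ℕ` with steps in
`{-1, 0, 1}`, encoded by letting row `n` be the `n`-fold image of `δ₀` under the Jacobi operator
all of whose coefficients are `1`. -/
def motzkinTriangle (n : ℕ) : ℕ → ℚ :=
  (jacobiOp 1 1)^[n] (Pi.single 0 1)

theorem motzkinTriangle_eq_zero_of_lt {n l : ℕ} (h : n < l) : motzkinTriangle n l = 0 :=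
  iterate_jacobiOp_single_eq_zero_of_lt 1 1 h

theorem motzkinTriangle_succ_zero (n : ℕ) :
    motzkinTriangle (n + 1) 0 = motzkinTriangle n 0 + motzkinTriangle n 1 := by
  simp [motzkinTriangle, Function.iterate_succ_apply', jacobiOp]

theorem motzkinTriangle_succ_succ (n l : ℕ) :
    motzkinTriangle (n + 1) (l + 1) =
      motzkinTriangle n l + motzkinTriangle n (l + 1) + motzkinTriangle n (l + 2) := by
  simp [motzkinTriangle, Function.iterate_succ_apply', jacobiOp]

theorem sum_motzkinTriangle_mul {n N : ℕ} (m : ℕ) (h : n ≤ N) :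
    ∑ l ∈ Finset.range (N + 1), motzkinTriangle n l * motzkinTriangle m l =
      motzkinTriangle (n + m) 0 := by
  simp only [motzkinTriangle]
  rw [sum_iterate_jacobiOp_single_mul 1 1 _ h, Function.iterate_add_apply]

/-- The ballot number counting the nonnegative paths with `l + m` up-steps and `m` down-steps.
Choosing the level steps separately, it is the weight of `n.choose (l + 2 * m)` in
`motzkinTriangle n l`. -/
def ballot (l m : ℕ) : ℚ :=
  (l + 1) / (l + m + 1) * (l + 2 * m).choose m

theorem ballot_zero_right (l : ℕ) : ballot l 0 = 1 := by
  have : (l : ℚ) + 1 ≠ 0 := by positivity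
  simp [ballot, this]

theorem ballot_eq_factorial_div (l m : ℕ) :
    ballot l m = (l + 1) * (l + 2 * m).factorial / (m.factorial * (l + m + 1).factorial) := by
  rw [ballot, show l + 2 * m = m + (l + m) by ring, Nat.cast_add_choose, Nat.factorial_succ]
  push_cast
  field_simp

theorem ballot_zero_succ (m : ℕ) : ballot 0 (m + 1) = ballot 1 m := by
  rw [ballot_eq_factorial_div, ballot_eq_factorial_div,
    show 0 + 2 * (m + 1) = (1 + 2 * m) + 1 by ring, show 0 + (m + 1) + 1 = 1 + m + 1 by ring,
    Nat.factorial_succ (1 + 2 * m), Nat.factorial_succ m]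
  push_cast
  field_simp
  ring

theorem ballot_succ_succ (l m : ℕ) :
    ballot (l + 1) (m + 1) = ballot l (m + 1) + ballot (l + 2) m := by
  simp only [ballot_eq_factorial_div]
  rw [show l + 1 + 2 * (m + 1) = (l + 2 * m + 2) + 1 by ring,
    show l + 2 * (m + 1) = l + 2 * m + 2 by ring, show l + 2 + 2 * m = l + 2 * m + 2 by ring,
    show l + 1 + (m + 1) + 1 = (l + m + 2) + 1 by ring,
    show l + (m + 1) + 1 = l + m + 2 by ring, show l + 2 + m + 1 = (l + m + 2) + 1 by ring,
    Nat.factorial_succ (l + 2 * m + 2), Nat.factorial_succ (l + m + 2), Nat.factorial_succ m]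
  push_cast
  field_simp
  ring

theorem ballot_eq_choose_mul_choose_div (l m : ℕ) :
    ballot l m = (l + 2 * m).choose l * (2 * m).choose m / (l + 1 + m).choose m := by
  rw [ballot_eq_factorial_div, Nat.cast_add_choose, two_mul, Nat.cast_add_choose, add_comm (l + 1),
    Nat.cast_add_choose, Nat.factorial_succ l, show l + m + 1 = m + (l + 1) by ring]
  push_cast
  field_simp

theorem sum_choose_mul_ballot_succ_zero (n N : ℕ) :
    ∑ m ∈ Finset.range (N + 1), ((n + 1).choose (0 + 2 * m) : ℚ) * ballot 0 m =
      ∑ m ∈ Finset.range (N + 1), (n.choose (0 + 2 * m) : ℚ) * ballot 0 m +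
        ∑ m ∈ Finset.range N, (n.choose (1 + 2 * m) : ℚ) * ballot 1 m := by
  have pascal (m : ℕ) : ((n + 1).choose (0 + 2 * (m + 1)) : ℚ) * ballot 0 (m + 1) =
      n.choose (0 + 2 * (m + 1)) * ballot 0 (m + 1) + n.choose (1 + 2 * m) * ballot 1 m := by
    rw [ballot_zero_succ, show 0 + 2 * (m + 1) = (1 + 2 * m) + 1 by ring, Nat.choose_succ_succ]
    push_cast
    ring
  simp only [Finset.sum_range_succ' _ N, pascal, Finset.sum_add_distrib, mul_zero, add_zero,
    Nat.choose_zero_right]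
  ring

theorem sum_choose_mul_ballot_succ_succ (n l N : ℕ) :
    ∑ m ∈ Finset.range (N + 1), ((n + 1).choose (l + 1 + 2 * m) : ℚ) * ballot (l + 1) m =
      ∑ m ∈ Finset.range (N + 1), (n.choose (l + 2 * m) : ℚ) * ballot l m +
        ∑ m ∈ Finset.range (N + 1), (n.choose (l + 1 + 2 * m) : ℚ) * ballot (l + 1) m +
        ∑ m ∈ Finset.range N, (n.choose (l + 2 + 2 * m) : ℚ) * ballot (l + 2) m := by
  have ballot_shift :
      ∑ m ∈ Finset.range (N + 1), (n.choose (l + 2 * m) : ℚ) * ballot (l + 1) m =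
        ∑ m ∈ Finset.range (N + 1), (n.choose (l + 2 * m) : ℚ) * ballot l m +
          ∑ m ∈ Finset.range N, (n.choose (l + 2 + 2 * m) : ℚ) * ballot (l + 2) m := by
    simp only [Finset.sum_range_succ' _ N, ballot_succ_succ, ballot_zero_right, mul_add,
      Finset.sum_add_distrib, mul_one, add_assoc, add_comm (2 : ℕ)]
    ring
  have pascal (m : ℕ) : ((n + 1).choose (l + 1 + 2 * m) : ℚ) =
      n.choose (l + 2 * m) + n.choose (l + 1 + 2 * m) := by
    rw [add_right_comm, Nat.choose_succ_succ, Nat.cast_add]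
  simp only [pascal, add_mul, Finset.sum_add_distrib, ballot_shift]
  ring

theorem motzkinTriangle_eq_sum {n l N : ℕ} (h : n < l + 2 * N) :
    motzkinTriangle n l = ∑ m ∈ Finset.range N, (n.choose (l + 2 * m) : ℚ) * ballot l m := by
  induction n generalizing l N with
  | zero =>
    rcases l with - | l
    · obtain ⟨N, rfl⟩ : ∃ N', N = N' + 1 := ⟨N - 1, by lia⟩
      simp [motzkinTriangle, Finset.sum_range_succ', ballot_zero_right, Nat.choose_eq_zero_of_lt]
    · simp [motzkinTriangle_eq_zero_of_lt, add_right_comm l 1]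
  | succ n ih =>
    rcases N with - | N
    · simp [motzkinTriangle_eq_zero_of_lt (show n + 1 < l by lia)]
    rcases l with - | l
    · rw [sum_choose_mul_ballot_succ_zero, motzkinTriangle_succ_zero, ← ih (by lia),
        ← ih (by lia)]
    · rw [sum_choose_mul_ballot_succ_succ, motzkinTriangle_succ_succ, ← ih (by lia),
        ← ih (by lia), ← ih (by lia)]

theorem choose_mul_F (n l : ℕ) : (n.choose l : ℚ) * F (n - l) (l + 1) = motzkinTriangle n l := by
  have trinomial_revision (m : ℕ) :
      (n.choose l : ℚ) * (n - l).choose (2 * m) = n.choose (l + 2 * m) * (l + 2 * m).choose l := by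
    have := Nat.choose_mul (n := n) (Nat.le_add_right l (2 * m))
    rw [Nat.add_sub_cancel_left] at this
    exact_mod_cast this.symm
  rw [motzkinTriangle_eq_sum (show n < l + 2 * ((n - l) / 2 + 1) by lia), F, Finset.mul_sum]
  refine Finset.sum_congr rfl fun m _ ↦ ?_
  rw [ballot_eq_choose_mul_choose_div, ← mul_div_assoc, ← mul_assoc, trinomial_revision,
    mul_assoc, mul_div_assoc]

theorem motzkin_eq_motzkinTriangle_zero (n : ℕ) : motzkin n = motzkinTriangle n 0 := by
  rw [motzkin, motzkinTriangle_eq_sum (show n < 0 + 2 * (n + 1) by lia)]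
  refine Finset.sum_congr rfl fun m _ ↦ ?_
  simp only [ballot, zero_add, Nat.cast_zero]
  ring

theorem hEnt_odd (n l : ℕ) : hEnt (n + 1) (2 * (l + 1) - 1) = motzkinTriangle n l := by
  rw [hEnt, if_pos (by lia), show (2 * (l + 1) - 1 + 1) / 2 = l + 1 by lia,
    Nat.add_sub_add_right n 1 l, Nat.add_sub_cancel, Nat.add_sub_cancel, choose_mul_F]

theorem hEnt_even (n l : ℕ) : hEnt (n + 1) (2 * (l + 1)) = n * motzkinTriangle (n - 1) l := by
  rw [hEnt, if_neg (by lia), show 2 * (l + 1) / 2 = l + 1 by lia, ← choose_mul_F,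
    show n + 1 - 2 = n - 1 by lia, show n + 1 - (l + 1) - 1 = n - 1 - l by lia,
    Nat.add_sub_cancel, Nat.cast_succ, add_sub_cancel_right, mul_assoc]

theorem mul_sum_motzkinTriangle_pred_mul {n N : ℕ} (m : ℕ) (h : n ≤ N + 1) :
    (n : ℚ) * ∑ l ∈ Finset.range (N + 1), motzkinTriangle (n - 1) l * motzkinTriangle m l =
      n * motzkin (n + m - 1) := by
  rcases n with - | n
  · simp
  · rw [Nat.add_sub_cancel, sum_motzkinTriangle_mul m (by lia), ← motzkin_eq_motzkinTriangle_zero,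
      show n + 1 + m - 1 = n + m by lia]

theorem finsum_mem_Ici_one_eq_sum_range {M : Type*} [AddCommMonoid M] {f : ℕ → M} {N : ℕ}
    (h : ∀ l, N < l → f (l + 1) = 0) :
    ∑ᶠ k ∈ Set.Ici 1, f k = ∑ l ∈ Finset.range (N + 1), f (l + 1) := by
  have Ici_one_eq_range : Set.Ici 1 = Set.range Nat.succ := by
    rw [Nat.range_succ]; rfl
  rw [Ici_one_eq_range, finsum_mem_range Nat.succ_injective]
  refine finsum_eq_sum_of_support_subset _ fun l hl ↦ ?_
  rw [Finset.coe_range, Set.mem_Iio, Nat.lt_succ_iff]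
  exact not_lt.mp fun hlt ↦ hl (h l hlt)

theorem sum_h_eq_motzkin_general (i j : ℕ) (hi : 1 ≤ i) (hj : 1 ≤ j) :
    ∑ᶠ k ∈ Set.Ici (1 : ℕ),
        (hEnt i (2 * k - 1) * hEnt j (2 * k) - hEnt i (2 * k) * hEnt j (2 * k - 1)) =
      ((j : ℚ) - (i : ℚ)) * motzkin (i + j - 3) := by
  obtain ⟨n, rfl⟩ := Nat.exists_eq_add_of_le' hi
  obtain ⟨p, rfl⟩ := Nat.exists_eq_add_of_le' hj
  rw [finsum_mem_Ici_one_eq_sum_range (N := n + p)]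
  · calc
      _ = p * ∑ l ∈ Finset.range (n + p + 1), motzkinTriangle (p - 1) l * motzkinTriangle n l -
          n * ∑ l ∈ Finset.range (n + p + 1), motzkinTriangle (n - 1) l * motzkinTriangle p l := by
        rw [Finset.mul_sum, Finset.mul_sum, ← Finset.sum_sub_distrib]
        refine Finset.sum_congr rfl fun l _ ↦ ?_
        rw [hEnt_odd, hEnt_odd, hEnt_even, hEnt_even]
        ring
      _ = p * motzkin (p + n - 1) - n * motzkin (n + p - 1) := by
        rw [mul_sum_motzkinTriangle_pred_mul n (by lia),
          mul_sum_motzkinTriangle_pred_mul p (by lia)]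
      _ = _ := by
        rw [show n + 1 + (p + 1) - 3 = n + p - 1 by lia, add_comm p n]
        push_cast
        ring
  · intro l hl
    rw [hEnt_odd, hEnt_odd, motzkinTriangle_eq_zero_of_lt (show n < l by lia),
      motzkinTriangle_eq_zero_of_lt (show p < l by lia), zero_mul, mul_zero, sub_zero]

/-- For `1 ≤ i < j`, the identity
`∑_{k ≥ 1} (h(i,2k-1)·h(j,2k) - h(i,2k)·h(j,2k-1)) = (j-i)·M_{i+j-3}`
(the sum having only finitely many nonzero terms). -/
theorem sum_h_eq_motzkin (i j : ℕ) (hi : 1 ≤ i) (hij : i < j) :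
    ∑ᶠ k ∈ Set.Ici (1 : ℕ),
        (hEnt i (2 * k - 1) * hEnt j (2 * k) - hEnt i (2 * k) * hEnt j (2 * k - 1)) =
      ((j : ℚ) - (i : ℚ)) * motzkin (i + j - 3) :=
  sum_h_eq_motzkin_general i j hi (hi.trans hij.le)
end

section
/- For every positive integer n, the Pfaffian of the 2n×2n skew-symmetric matrix whose (i,j) entry is (j−i)·(M_{i+j−3} + M_{i+j−2}) for 1 ≤ i,j ≤ 2n (with the convention that the (1,1) entry, whose factor j−i vanishes, is 0) equals ∏_{i=0}^{n−1} (4i+2). -/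
/-- The Pfaffian of a `2N × 2N` matrix, defined as the sum over all partitions of
the index set into two-element blocks (encoded as permutations `σ` with
`σ(2i) < σ(2i+1)` and `σ(0) < σ(2) < … < σ(2N-2)`, one for each partition) of the
sign of `σ` times the product `∏ i, A (σ (2i)) (σ (2i+1))`. -/
def pfaffian {R : Type*} [CommRing R] {N : ℕ}
    (A : Matrix (Fin (2 * N)) (Fin (2 * N)) R) : R :=
  ∑ σ ∈ Finset.univ.filter (fun σ : Equiv.Perm (Fin (2 * N)) =>
      (∀ i : Fin N, σ ⟨2 * i.val, by have := i.isLt; omega⟩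
          < σ ⟨2 * i.val + 1, by have := i.isLt; omega⟩) ∧
      (∀ i j : Fin N, i < j → σ ⟨2 * i.val, by have := i.isLt; omega⟩
          < σ ⟨2 * j.val, by have := j.isLt; omega⟩)),
    (Equiv.Perm.sign σ : ℤ) •
      ∏ i : Fin N, A (σ ⟨2 * i.val, by have := i.isLt; omega⟩)
        (σ ⟨2 * i.val + 1, by have := i.isLt; omega⟩)

/-!
Write `L` for integration against the semicircle law on `[-2, 2]`. The moments of `1 + x` under `L`
are the Motzkin numbers, so the entry at `(i, j)` is `ω ((X + 1) ^ i) ((X + 1) ^ j)` for the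
alternating form `ω f g = L ((2 + x) (f g' - f' g))`. The Pfaffian of such a Gram matrix does not
change when one monic basis is replaced by another: `2 ^ n * n!` times it is the sum of the same
terms over all permutations, which is alternating multilinear in the basis, so that a change of
basis multiplies it by a determinant. In the basis `V_n` of Chebyshev polynomials of the third kind,
`V_n (2 cos θ) = cos ((n + 1/2) θ) / cos (θ / 2)`, trigonometry gives
`(2 + x) (V_j V_k' - V_j' V_k) = (k - j) S_{j + k} + (j + k + 1) S_{k - j - 1}`, where
`S_n (2 cos θ) = sin ((n + 1) θ) / sin θ`. Since `L S_0 = 1` and `L S_n = 0` for `n > 0`, the form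
`ω` vanishes on `V_j, V_k` for `k > j + 1` and is `2 j + 2` for `k = j + 1`. Hence only the pairing
`{0, 1}, {2, 3}, …` contributes, with product `∏ (2 (2 i) + 2)`.
-/

open Equiv Polynomial

section Pfaffian

variable {R M : Type*} [CommRing R] [AddCommGroup M] [Module R M] {N : ℕ}

/-- The identification of `Fin (2 * N)` with `N` consecutive blocks of two indices, through which
the positions `2 * i` and `2 * i + 1` in the definition of `pfaffian` are addressed. -/
def blockEquiv (N : ℕ) : Fin N × Fin 2 ≃ Fin (2 * N) :=
  finProdFinEquiv.trans (finCongr (Nat.mul_comm N 2))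

theorem val_blockEquiv (i : Fin N) (b : Fin 2) : (blockEquiv N (i, b) : ℕ) = 2 * i + b := by
  simp [blockEquiv, add_comm]

/-- The permutations that index the sum `pfaffian`: each of them encodes a partition into pairs by
listing the pairs in increasing order of their first entries, the smaller entry of each pair
coming first. -/
def IsPairing (σ : Perm (Fin (2 * N))) : Prop :=
  (∀ i, σ (blockEquiv N (i, 0)) < σ (blockEquiv N (i, 1))) ∧
    StrictMono fun i ↦ σ (blockEquiv N (i, 0))

/-- The summand of a permutation in the expansion of the Pfaffian, considered for all permutations
and not only for those that satisfy `IsPairing`. -/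
def pfaffianTerm (A : Matrix (Fin (2 * N)) (Fin (2 * N)) R) (σ : Perm (Fin (2 * N))) : R :=
  (Perm.sign σ : ℤ) • ∏ i, A (σ (blockEquiv N (i, 0))) (σ (blockEquiv N (i, 1)))

open Classical in
theorem pfaffian_eq_sum_pfaffianTerm (A : Matrix (Fin (2 * N)) (Fin (2 * N)) R) :
    pfaffian A = ∑ σ with IsPairing σ, pfaffianTerm A σ := by
  have even_eq (i : Fin N) : (⟨2 * i, by lia⟩ : Fin (2 * N)) = blockEquiv N (i, 0) :=
    Fin.ext (by simp [val_blockEquiv])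
  have odd_eq (i : Fin N) : (⟨2 * i + 1, by lia⟩ : Fin (2 * N)) = blockEquiv N (i, 1) :=
    Fin.ext (by simp [val_blockEquiv])
  simp only [pfaffian, even_eq, odd_eq, pfaffianTerm]
  exact Finset.sum_congr (Finset.filter_congr fun _ _ ↦ Iff.rfl) fun _ _ ↦ rfl

/-- The permutation of the index set that sends block `i` to block `g.1 i` and rearranges it
by `g.2 i`. -/
def blockPerm (g : Perm (Fin N) × (Fin N → Perm (Fin 2))) : Perm (Fin (2 * N)) :=
  (blockEquiv N).permCongr ((prodCongrRight g.2).trans (prodCongrLeft fun _ ↦ g.1))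

theorem blockPerm_apply (g : Perm (Fin N) × (Fin N → Perm (Fin 2))) (i : Fin N) (b : Fin 2) :
    blockPerm g (blockEquiv N (i, b)) = blockEquiv N (g.1 i, g.2 i b) := by
  simp [blockPerm, permCongr_apply]

theorem sign_blockPerm (g : Perm (Fin N) × (Fin N → Perm (Fin 2))) :
    Perm.sign (blockPerm g) = ∏ i, Perm.sign (g.2 i) := by
  simp [blockPerm, Perm.sign_trans, Perm.sign_prodCongrLeft, Perm.sign_prodCongrRight]

theorem pfaffianTerm_mul_blockPerm {A : Matrix (Fin (2 * N)) (Fin (2 * N)) R}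
    (hA : A.transpose = -A) (σ : Perm (Fin (2 * N)))
    (g : Perm (Fin N) × (Fin N → Perm (Fin 2))) :
    pfaffianTerm A (σ * blockPerm g) = pfaffianTerm A σ := by
  have skew (k l : Fin (2 * N)) : A k l = -A l k := congrFun₂ hA l k
  have block_entry (i : Fin N) (ε : Perm (Fin 2)) :
      A (σ (blockEquiv N (i, ε 0))) (σ (blockEquiv N (i, ε 1))) =
        (Perm.sign ε : ℤ) • A (σ (blockEquiv N (i, 0))) (σ (blockEquiv N (i, 1))) := by
    obtain rfl | rfl : ε = 1 ∨ ε = swap 0 1 := by decide +revert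
    · simp
    · simpa using skew _ _
  have sign_sq : (∏ i, (Perm.sign (g.2 i) : ℤ)) * ∏ i, (Perm.sign (g.2 i) : ℤ) = 1 := by
    rw [← Units.coe_prod, ← Units.val_mul, Int.units_mul_self, Units.val_one]
  simp only [pfaffianTerm, Perm.mul_apply, blockPerm_apply, block_entry, Finset.prod_smul,
    Perm.sign_mul, sign_blockPerm, Units.val_mul, Units.coe_prod, smul_smul]
  rw [mul_assoc, sign_sq, mul_one,
    Equiv.prod_comp g.1 fun i ↦ A (σ (blockEquiv N (i, 0))) (σ (blockEquiv N (i, 1)))]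

theorem existsUnique_perm_strictMono_comp {α : Type*} [LinearOrder α] {n : ℕ} {f : Fin n → α}
    (hf : Function.Injective f) : ∃! π : Perm (Fin n), StrictMono (f ∘ π) := by
  refine ⟨Tuple.sort f, (Tuple.monotone_sort f).strictMono_of_injective
    (hf.comp (Tuple.sort f).injective), fun π hπ ↦ ?_⟩
  exact Equiv.ext <| congrFun <|
    hf.comp_left (Tuple.unique_monotone hπ.monotone (Tuple.monotone_sort f))

theorem existsUnique_isPairing_mul_blockPerm (τ : Perm (Fin (2 * N))) :
    ∃! g, IsPairing (τ * blockPerm g) := by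
  have injective_block (i : Fin N) : Function.Injective fun b ↦ τ (blockEquiv N (i, b)) :=
    fun _ _ h ↦ (Prod.ext_iff.1 ((blockEquiv N).injective (τ.injective h))).2
  choose δ δ_mono δ_unique using fun i ↦ existsUnique_perm_strictMono_comp (injective_block i)
  have injective_min : Function.Injective fun i ↦ τ (blockEquiv N (i, δ i 0)) :=
    fun _ _ h ↦ (Prod.ext_iff.1 ((blockEquiv N).injective (τ.injective h))).1
  obtain ⟨π, π_mono, π_unique⟩ := existsUnique_perm_strictMono_comp injective_min
  have isPairing_iff (g : Perm (Fin N) × (Fin N → Perm (Fin 2))) :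
      IsPairing (τ * blockPerm g) ↔
        (∀ i, τ (blockEquiv N (g.1 i, g.2 i 0)) < τ (blockEquiv N (g.1 i, g.2 i 1))) ∧
          StrictMono fun i ↦ τ (blockEquiv N (g.1 i, g.2 i 0)) := by
    simp only [IsPairing, Perm.mul_apply, blockPerm_apply]
  refine ⟨(π, fun i ↦ δ (π i)), (isPairing_iff _).2 ⟨fun i ↦ δ_mono (π i) Fin.zero_lt_one,
    π_mono⟩, fun g hg ↦ ?_⟩
  obtain ⟨block_lt, first_mono⟩ := (isPairing_iff g).1 hg
  have snd_eq (i : Fin N) : g.2 i = δ (g.1 i) :=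
    δ_unique _ _ (Fin.strictMono_iff_lt_succ.2 fun b ↦ by fin_cases b; exact block_lt i)
  have fst_eq : g.1 = π := π_unique _ (by simp only [snd_eq] at first_mono; exact first_mono)
  exact Prod.ext fst_eq (funext fun i ↦ by rw [snd_eq, fst_eq])

theorem sum_pfaffianTerm {A : Matrix (Fin (2 * N)) (Fin (2 * N)) R} (hA : A.transpose = -A) :
    ∑ τ, pfaffianTerm A τ =
      Fintype.card (Perm (Fin N) × (Fin N → Perm (Fin 2))) • pfaffian A := by
  classical
  calc ∑ τ, pfaffianTerm A τ
      = ∑ τ, ∑ g, if IsPairing (τ * blockPerm g) then pfaffianTerm A (τ * blockPerm g) else 0 := by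
        refine Finset.sum_congr rfl fun τ _ ↦ ?_
        obtain ⟨g, hg, hg_unique⟩ := existsUnique_isPairing_mul_blockPerm τ
        rw [Fintype.sum_eq_single g fun g' hg' ↦ if_neg (mt (hg_unique g') hg'), if_pos hg,
          pfaffianTerm_mul_blockPerm hA]
    _ = ∑ g : Perm (Fin N) × (Fin N → Perm (Fin 2)), ∑ σ,
          if IsPairing σ then pfaffianTerm A σ else 0 := by
        rw [Finset.sum_comm]
        exact Finset.sum_congr rfl fun g _ ↦ Equiv.sum_comp (Equiv.mulRight (blockPerm g))
          fun σ ↦ if IsPairing σ then pfaffianTerm A σ else 0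
    _ = Fintype.card (Perm (Fin N) × (Fin N → Perm (Fin 2))) • pfaffian A := by
        rw [Finset.sum_const, Finset.card_univ, ← Finset.sum_filter,
          ← pfaffian_eq_sum_pfaffianTerm]

/-- The matrix of values of a bilinear form on a family of vectors. -/
def gramMatrix {ι : Type*} (ω : M →ₗ[R] M →ₗ[R] R) (v : ι → M) : Matrix ι ι R :=
  Matrix.of fun i j ↦ ω (v i) (v j)

theorem transpose_gramMatrix {ι : Type*} {ω : M →ₗ[R] M →ₗ[R] R} (hω : ω.IsAlt) (v : ι → M) :
    (gramMatrix ω v).transpose = -gramMatrix ω v :=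
  Matrix.ext fun i j ↦ (hω.neg (v i) (v j)).symm

/-- The multilinear map `v ↦ ∏ i, ω (v (2 * i)) (v (2 * i + 1))`, whose alternatization is the
sum of `pfaffianTerm` over all permutations. -/
def blockProd (N : ℕ) (ω : M →ₗ[R] M →ₗ[R] R) : MultilinearMap R (fun _ : Fin (2 * N) ↦ M) R :=
  ((MultilinearMap.mkPiAlgebra R (Fin N) R).compMultilinearMap fun _ ↦
    LinearMap.uncurryLeft (M := fun _ : Fin 2 ↦ M)
      ((MultilinearMap.ofSubsingletonₗ R R M R (0 : Fin 1)).toLinearMap ∘ₗ ω)).domDomCongr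
    ((Equiv.sigmaEquivProd (Fin N) (Fin 2)).trans (blockEquiv N))

theorem blockProd_apply (ω : M →ₗ[R] M →ₗ[R] R) (v : Fin (2 * N) → M) :
    blockProd N ω v = ∏ i, ω (v (blockEquiv N (i, 0))) (v (blockEquiv N (i, 1))) := by
  rfl

theorem sum_pfaffianTerm_gramMatrix (ω : M →ₗ[R] M →ₗ[R] R) (v : Fin (2 * N) → M) :
    ∑ σ, pfaffianTerm (gramMatrix ω v) σ = (blockProd N ω).alternatization v := by
  simp only [MultilinearMap.alternatization_apply, MultilinearMap.domDomCongr_apply,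
    blockProd_apply]
  rfl

theorem map_sum_smul_eq_det_mul {ι : Type*} [Fintype ι] [DecidableEq ι] (f : M [⋀^ι]→ₗ[R] R)
    (B : Matrix ι ι R) (v : ι → M) : f (fun i ↦ ∑ k, B i k • v k) = B.det * f v := by
  have h := DFunLike.congr_fun ((f.compLinearMap (Fintype.linearCombination R v)).eq_smul_basis_det
    (Pi.basisFun R ι)) fun i ↦ B i
  simp only [AlternatingMap.compLinearMap_apply, AlternatingMap.smul_apply,
    Pi.basisFun_det_apply, Pi.basisFun_apply, Fintype.linearCombination_apply,
    Pi.single_apply, ite_smul, one_smul, zero_smul,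
    Finset.sum_ite_eq', Finset.mem_univ, if_true, smul_eq_mul] at h
  exact h.trans (mul_comm _ _)

theorem pfaffian_gramMatrix_sum_smul [IsAddTorsionFree R] {ω : M →ₗ[R] M →ₗ[R] R} (hω : ω.IsAlt)
    (B : Matrix (Fin (2 * N)) (Fin (2 * N)) R) (v : Fin (2 * N) → M) :
    pfaffian (gramMatrix ω fun i ↦ ∑ k, B i k • v k) = B.det * pfaffian (gramMatrix ω v) := by
  apply nsmul_right_injective
    (Fintype.card_ne_zero (α := Perm (Fin N) × (Fin N → Perm (Fin 2))))
  simp only [← mul_smul_comm]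
  rw [← sum_pfaffianTerm (transpose_gramMatrix hω _),
    ← sum_pfaffianTerm (transpose_gramMatrix hω _), sum_pfaffianTerm_gramMatrix,
    sum_pfaffianTerm_gramMatrix, map_sum_smul_eq_det_mul]

theorem blockEquiv_lt_blockEquiv_iff {i j : Fin N} {b c : Fin 2} :
    blockEquiv N (i, b) < blockEquiv N (j, c) ↔ i < j ∨ i = j ∧ b < c := by
  simp only [Fin.lt_def, Fin.ext_iff, val_blockEquiv]
  lia

theorem isPairing_one : IsPairing (1 : Perm (Fin (2 * N))) :=
  ⟨fun _ ↦ blockEquiv_lt_blockEquiv_iff.2 (.inr ⟨rfl, Fin.zero_lt_one⟩),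
    fun _ _ hij ↦ blockEquiv_lt_blockEquiv_iff.2 (.inl hij)⟩

theorem IsPairing.eq_one_of_forall_succ {σ : Perm (Fin (2 * N))} (hσ : IsPairing σ)
    (hsucc : ∀ i, (σ (blockEquiv N (i, 0)) : ℕ) + 1 = σ (blockEquiv N (i, 1))) : σ = 1 := by
  have first_le (i : Fin N) (b : Fin 2) : σ (blockEquiv N (i, 0)) ≤ σ (blockEquiv N (i, b)) := by
    fin_cases b
    exacts [le_rfl, (hσ.1 i).le]
  have le_second (i : Fin N) (b : Fin 2) : σ (blockEquiv N (i, b)) ≤ σ (blockEquiv N (i, 1)) := by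
    fin_cases b
    exacts [(hσ.1 i).le, le_rfl]
  have second_lt_first {i j : Fin N} (hij : i < j) :
      σ (blockEquiv N (i, 1)) < σ (blockEquiv N (j, 0)) := by
    refine lt_of_le_of_ne ?_ (by simp [σ.injective.eq_iff])
    rw [Fin.le_def, ← hsucc]
    exact hσ.2 hij
  suffices StrictMono σ from (Perm.monotone_iff σ).1 this.monotone
  intro k l hkl
  obtain ⟨⟨i, b⟩, rfl⟩ := (blockEquiv N).surjective k
  obtain ⟨⟨j, c⟩, rfl⟩ := (blockEquiv N).surjective l
  obtain hij | ⟨rfl, hbc⟩ := blockEquiv_lt_blockEquiv_iff.1 hkl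
  · exact (le_second i b).trans_lt ((second_lt_first hij).trans_le (first_le j c))
  · obtain ⟨rfl, rfl⟩ : b = 0 ∧ c = 1 := by lia
    exact hσ.1 i

theorem pfaffian_eq_prod_of_forall_eq_zero {A : Matrix (Fin (2 * N)) (Fin (2 * N)) R}
    (hA : ∀ k l : Fin (2 * N), (k : ℕ) + 1 < l → A k l = 0) :
    pfaffian A = ∏ i, A (blockEquiv N (i, 0)) (blockEquiv N (i, 1)) := by
  classical
  rw [pfaffian_eq_sum_pfaffianTerm, Finset.sum_eq_single_of_mem 1 (by simpa using isPairing_one)]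
  · simp [pfaffianTerm]
  · intro σ hσ hne
    have hσ : IsPairing σ := by simpa using hσ
    obtain ⟨i, hi⟩ : ∃ i, (σ (blockEquiv N (i, 0)) : ℕ) + 1 ≠ σ (blockEquiv N (i, 1)) := by
      by_contra! hsucc
      exact hne (hσ.eq_one_of_forall_succ hsucc)
    rw [pfaffianTerm, Finset.prod_eq_zero (Finset.mem_univ i)
      (hA _ _ (lt_of_le_of_ne (hσ.1 i) hi)), smul_zero]

theorem pfaffian_gramMatrix_of_monic [IsAddTorsionFree R] {ω : R[X] →ₗ[R] R[X] →ₗ[R] R}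
    (hω : ω.IsAlt) {p : Fin (2 * N) → R[X]} (p_monic : ∀ i, (p i).Monic)
    (p_natDegree : ∀ i, (p i).natDegree = i) :
    pfaffian (gramMatrix ω p) = pfaffian (gramMatrix ω fun i : Fin (2 * N) ↦ X ^ (i : ℕ)) := by
  have det_coeff : (Matrix.of fun i j : Fin (2 * N) ↦ (p i).coeff j).det = 1 := by
    rw [← Matrix.det_transpose]
    exact Matrix.det_matrixOfPolynomials p p_natDegree p_monic
  have p_eq_sum : p = fun i ↦ ∑ k : Fin (2 * N), (p i).coeff k • X ^ (k : ℕ) := by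
    funext i
    have p_eq := (p i).as_sum_range_C_mul_X_pow' (p_natDegree i ▸ i.isLt)
    rw [Finset.sum_range] at p_eq
    simpa only [smul_eq_C_mul] using p_eq
  have pfaffian_eq := pfaffian_gramMatrix_sum_smul hω
    (Matrix.of fun i j : Fin (2 * N) ↦ (p i).coeff j) fun i ↦ X ^ (i : ℕ)
  rw [det_coeff, one_mul] at pfaffian_eq
  simpa only [Matrix.of_apply, ← p_eq_sum] using pfaffian_eq

end Pfaffian

section Chebyshev

variable (R : Type*) [CommRing R]

theorem eq_of_add_one_eq_mul_sub_add {A : Type*} [Ring A] {x : A} {h f g : ℤ → A} {n : ℤ}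
    (hf : ∀ n, f (n + 1) = x * f n - f (n - 1) + h n)
    (hg : ∀ n, g (n + 1) = x * g n - g (n - 1) + h n)
    (zero : f 0 = g 0) (neg_one : f (-1) = g (-1)) : f n = g n := by
  suffices f n = g n ∧ f (n - 1) = g (n - 1) from this.1
  induction n using Int.induction_on with
  | zero => exact ⟨zero, neg_one⟩
  | succ n ih => simp [hf, hg, ih]
  | pred n ih =>
    obtain ⟨eq_at, eq_pred⟩ := ih
    have hf_pred := hf (-n - 1)
    rw [sub_add_cancel, eq_at, eq_pred, ← sub_add_cancel (-n : ℤ) 1, hg] at hf_pred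
    exact ⟨eq_pred, by simpa using hf_pred.symm⟩

theorem chebyshevC_eq_S_sub_S (n : ℤ) :
    Chebyshev.C R n = Chebyshev.S R n - Chebyshev.S R (n - 2) := by
  rw [Chebyshev.C_eq_S_sub_X_mul_S]
  linear_combination Chebyshev.S_eq R n

theorem four_sub_X_sq_mul_derivative_S (n : ℤ) :
    (4 - X ^ 2) * derivative (Chebyshev.S R n) =
      (n + 2 : R[X]) * Chebyshev.S R (n - 1) - (n : R[X]) * Chebyshev.S R (n + 1) := by
  apply eq_of_add_one_eq_mul_sub_add (x := X) (h := fun n ↦ (4 - X ^ 2) * Chebyshev.S R n) (n := n)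
  · intro n
    rw [Chebyshev.S_add_one, derivative_sub, derivative_mul, derivative_X]
    ring
  · intro n
    push_cast
    linear_combination (norm := ring_nf) (n + 1) * Chebyshev.S_add_one R (n - 1) -
      X * Chebyshev.S_add_one R n - (n + 1) * Chebyshev.S_add_one R (n + 1)
  · simp
  · norm_num

/-- The Chebyshev polynomials of the third kind, rescaled to be monic with integer coefficients:
`chebyshevV R n` is `cos ((n + 1/2) θ) / cos (θ / 2)` at `2 * cos θ`. -/
noncomputable def chebyshevV (n : ℤ) : R[X] :=
  Chebyshev.S R n - Chebyshev.S R (n - 1)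

theorem chebyshevV_zero : chebyshevV R 0 = 1 := by
  simp [chebyshevV]

theorem chebyshevV_neg_one : chebyshevV R (-1) = 1 := by
  simp [chebyshevV]

theorem chebyshevV_add_one (n : ℤ) :
    chebyshevV R (n + 1) = X * chebyshevV R n - chebyshevV R (n - 1) := by
  simp only [chebyshevV]
  linear_combination (norm := ring_nf) Chebyshev.S_add_one R n - Chebyshev.S_add_one R (n - 1)

theorem monic_chebyshevV_and_natDegree_eq [Nontrivial R] (n : ℕ) :
    (chebyshevV R n).Monic ∧ (chebyshevV R n).natDegree = n := by
  induction n using Nat.twoStepInduction with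
  | zero => simp [chebyshevV_zero]
  | one =>
    have V_one : chebyshevV R (1 : ℕ) = X - C 1 := by simp [chebyshevV]
    exact V_one ▸ ⟨monic_X_sub_C 1, natDegree_X_sub_C 1⟩
  | more n ih ih_succ =>
    obtain ⟨-, natDegree_eq⟩ := ih
    obtain ⟨monic_succ, natDegree_succ⟩ := ih_succ
    have V_rec : chebyshevV R (n + 2 : ℕ) = X * chebyshevV R (n + 1 : ℕ) - chebyshevV R n := by
      simpa [add_assoc] using chebyshevV_add_one R (n + 1)
    have natDegree_X_mul : (X * chebyshevV R (n + 1 : ℕ)).natDegree = n + 2 := by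
      rw [natDegree_X_mul monic_succ.ne_zero, natDegree_succ]
    have natDegree_lt : (chebyshevV R n).natDegree < (X * chebyshevV R (n + 1 : ℕ)).natDegree := by
      lia
    rw [V_rec]
    exact ⟨(monic_X.mul monic_succ).sub_of_left (degree_lt_degree natDegree_lt),
      (natDegree_sub_eq_left_of_natDegree_lt natDegree_lt).trans natDegree_X_mul⟩

theorem two_add_X_mul_chebyshevV (j : ℤ) :
    (2 + X) * chebyshevV R j = Chebyshev.C R (j + 1) + Chebyshev.C R j := by
  simp only [chebyshevC_eq_S_sub_S, chebyshevV]
  linear_combination (norm := ring_nf) Chebyshev.S_add_one R (j - 1) - Chebyshev.S_add_one R j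

theorem two_add_X_mul_chebyshevV_mul_chebyshevV (j k : ℤ) :
    (2 + X) * chebyshevV R j * chebyshevV R k =
      Chebyshev.C R (j + k + 1) + Chebyshev.C R (k - j) := by
  apply eq_of_add_one_eq_mul_sub_add (x := X) (h := fun _ ↦ 0) (n := k)
  · intro k
    rw [chebyshevV_add_one]
    ring
  · intro k
    linear_combination (norm := ring_nf) Chebyshev.C_add_one R (j + k + 1) +
      Chebyshev.C_add_one R (k - j)
  · simp [chebyshevV_zero, two_add_X_mul_chebyshevV, Chebyshev.C_neg]
  · have C_neg_one_sub : Chebyshev.C R (-1 - j) = Chebyshev.C R (j + 1) := by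
      rw [← Chebyshev.C_neg, neg_sub, sub_neg_eq_add]
    simp [chebyshevV_neg_one, two_add_X_mul_chebyshevV, C_neg_one_sub, add_comm]

theorem two_add_X_mul_derivative_chebyshevV (j : ℤ) :
    (2 + X) * derivative (chebyshevV R j) =
      (j : R[X]) * Chebyshev.S R j + (j + 1 : R[X]) * Chebyshev.S R (j - 1) := by
  apply eq_of_add_one_eq_mul_sub_add (x := X) (h := fun j ↦ (2 + X) * chebyshevV R j) (n := j)
  · intro j
    rw [chebyshevV_add_one, derivative_sub, derivative_mul, derivative_X]
    ring
  · intro j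
    simp only [two_add_X_mul_chebyshevV, chebyshevC_eq_S_sub_S]
    push_cast
    linear_combination (norm := ring_nf) j * Chebyshev.S_add_one R j +
      (j + 1) * Chebyshev.S_add_one R (j - 1)
  · simp [chebyshevV_zero]
  · simp [chebyshevV_neg_one]

theorem two_add_X_mul_wronskian_chebyshevV (j k : ℤ) :
    (2 + X) * wronskian (chebyshevV R j) (chebyshevV R k) =
      (k - j : R[X]) * Chebyshev.S R (j + k) + (j + k + 1 : R[X]) * Chebyshev.S R (k - j - 1) := by
  apply eq_of_add_one_eq_mul_sub_add (x := X)
    (h := fun k ↦ (2 + X) * chebyshevV R j * chebyshevV R k) (n := k)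
  · intro k
    rw [chebyshevV_add_one, wronskian, wronskian, wronskian, derivative_sub, derivative_mul,
      derivative_X]
    ring
  · intro k
    simp only [two_add_X_mul_chebyshevV_mul_chebyshevV, chebyshevC_eq_S_sub_S]
    push_cast
    linear_combination (norm := ring_nf) (k - j) * Chebyshev.S_add_one R (j + k) +
      (j + k + 1) * Chebyshev.S_add_one R (k - j - 1)
  · rw [zero_sub, Chebyshev.S_neg_sub_one, chebyshevV_zero, wronskian, derivative_one]
    push_cast
    rw [add_zero]
    linear_combination -two_add_X_mul_derivative_chebyshevV R j
  · rw [show -1 - j - 1 = -j - 2 by ring, Chebyshev.S_neg_sub_two, chebyshevV_neg_one, wronskian,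
      derivative_one, ← sub_eq_add_neg]
    push_cast
    linear_combination -two_add_X_mul_derivative_chebyshevV R j

end Chebyshev

section Semicircle

variable (R : Type*) [CommRing R]

/-- The integral against the semicircle law on `[-2, 2]`, given by its moments: the odd ones
vanish and the even ones are the Catalan numbers. -/
noncomputable def semicircle : R[X] →ₗ[R] R :=
  (basisMonomials R).constr R fun m ↦ if Even m then (catalan (m / 2) : R) else 0

theorem semicircle_X_pow_two_mul (k : ℕ) : semicircle R (X ^ (2 * k)) = catalan k := by
  have h := (basisMonomials R).constr_basis R
    (fun m ↦ if Even m then (catalan (m / 2) : R) else 0) (2 * k)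
  simpa [semicircle, X_pow_eq_monomial] using h

theorem semicircle_X_pow_two_mul_add_one (k : ℕ) : semicircle R (X ^ (2 * k + 1)) = 0 := by
  have h := (basisMonomials R).constr_basis R
    (fun m ↦ if Even m then (catalan (m / 2) : R) else 0) (2 * k + 1)
  simpa [semicircle, X_pow_eq_monomial] using h

theorem add_two_mul_catalan_succ (k : ℕ) :
    (k + 2) * catalan (k + 1) = 2 * (2 * k + 1) * catalan k := by
  have centralBinom_succ := k.succ_mul_centralBinom_succ
  rw [← succ_mul_catalan_eq_centralBinom, ← succ_mul_catalan_eq_centralBinom] at centralBinom_succ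
  refine Nat.eq_of_mul_eq_mul_left k.succ_pos ?_
  rw [Nat.succ_eq_add_one]
  linear_combination centralBinom_succ

theorem semicircle_X_pow_add_two (m : ℕ) :
    (m + 4) * semicircle R (X ^ (m + 2)) = 4 * (m + 1) * semicircle R (X ^ m) := by
  obtain ⟨k, rfl | rfl⟩ := m.even_or_odd'
  · have catalan_succ := congrArg (Nat.cast (R := R)) (add_two_mul_catalan_succ k)
    rw [← mul_add_one, semicircle_X_pow_two_mul, semicircle_X_pow_two_mul]
    push_cast at *
    linear_combination 2 * catalan_succ
  · rw [add_right_comm, ← mul_add_one, semicircle_X_pow_two_mul_add_one,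
      semicircle_X_pow_two_mul_add_one, mul_zero, mul_zero]

/- Integration by parts: the density `w = √(4 - x²) / (2π)` satisfies `((4 - x²) w)' = -3 x w`. -/
theorem semicircle_four_sub_X_sq_mul_derivative (f : R[X]) :
    semicircle R ((4 - X ^ 2) * derivative f) = 3 * semicircle R (X * f) := by
  suffices semicircle R ∘ₗ LinearMap.mulLeft R (4 - X ^ 2) ∘ₗ derivative =
      (3 : R) • semicircle R ∘ₗ LinearMap.mulLeft R X from LinearMap.congr_fun this f
  refine (basisMonomials R).ext fun m ↦ ?_
  simp only [coe_basisMonomials, ← X_pow_eq_monomial, LinearMap.comp_apply, LinearMap.smul_apply,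
    LinearMap.mulLeft_apply, smul_eq_mul, ← pow_succ']
  cases m with
  | zero =>
    have semicircle_X := semicircle_X_pow_two_mul_add_one R 0
    simp_all
  | succ m =>
    have expand : (4 - X ^ 2) * derivative (X ^ (m + 1) : R[X]) =
        (m + 1) • (4 • X ^ m - X ^ (m + 2)) := by
      simp only [derivative_X_pow_succ, map_add, map_natCast, map_one, nsmul_eq_mul]
      push_cast
      ring
    rw [expand, map_nsmul, map_sub, map_nsmul]
    simp only [nsmul_eq_mul]
    push_cast
    linear_combination -semicircle_X_pow_add_two R m

theorem semicircle_S_zero : semicircle R (Chebyshev.S R 0) = 1 := by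
  simpa using semicircle_X_pow_two_mul R 0

theorem add_three_smul_semicircle_S_add_one (n : ℤ) :
    (n + 3) • semicircle R (Chebyshev.S R (n + 1)) =
      (n - 1) • semicircle R (Chebyshev.S R (n - 1)) := by
  have derivative_eq : (4 - X ^ 2) * derivative (Chebyshev.S R n) =
      (n + 2) • Chebyshev.S R (n - 1) - n • Chebyshev.S R (n + 1) := by
    simp [four_sub_X_sq_mul_derivative_S]
  have X_mul_S : X * Chebyshev.S R n = Chebyshev.S R (n + 1) + Chebyshev.S R (n - 1) := by
    simp [Chebyshev.S_add_one]
  have by_parts := semicircle_four_sub_X_sq_mul_derivative R (Chebyshev.S R n)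
  rw [derivative_eq, X_mul_S, map_sub, map_zsmul, map_zsmul, map_add] at by_parts
  simp only [zsmul_eq_mul] at *
  push_cast at *
  linear_combination -by_parts

theorem semicircle_S_of_pos [IsAddTorsionFree R] {n : ℤ} (hn : 0 < n) :
    semicircle R (Chebyshev.S R n) = 0 := by
  lift n to ℕ using hn.le
  induction n using Nat.twoStepInduction with
  | zero => simp at hn
  | one =>
    have smul_eq := add_three_smul_semicircle_S_add_one R 0
    rw [zero_sub, Chebyshev.S_neg_one, map_zero, smul_zero] at smul_eq
    exact (smul_eq_zero.1 smul_eq).resolve_left (by decide)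
  | more n ih _ =>
    have smul_eq := add_three_smul_semicircle_S_add_one R (n + 1)
    have smul_eq_zero_of_ih : (n : ℤ) • semicircle R (Chebyshev.S R n) = 0 := by
      obtain rfl | n_pos := n.eq_zero_or_pos
      · exact zero_smul ℤ _
      · rw [ih (mod_cast n_pos), smul_zero]
    rw [add_sub_cancel_right, smul_eq_zero_of_ih] at smul_eq
    exact (smul_eq_zero.1 smul_eq).resolve_left (by lia)

theorem sum_range_two_mul {M : Type*} [AddCommMonoid M] (f : ℕ → M) (n : ℕ) :
    ∑ i ∈ Finset.range (2 * n), f i = ∑ k ∈ Finset.range n, (f (2 * k) + f (2 * k + 1)) := by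
  induction n with
  | zero => rfl
  | succ n ih => rw [mul_add_one, Finset.sum_range_succ, Finset.sum_range_succ, ih,
      Finset.sum_range_succ, add_assoc]

theorem semicircle_X_add_one_pow (n : ℕ) : semicircle R ((X + 1) ^ n) =
    ∑ k ∈ Finset.range (n + 1), (n.choose (2 * k) * catalan k : R) := by
  calc semicircle R ((X + 1) ^ n)
      = ∑ i ∈ Finset.range (n + 1), n.choose i * semicircle R (X ^ i) := by
        simp [add_pow, mul_comm, ← nsmul_eq_mul]
    _ = ∑ i ∈ Finset.range (2 * (n + 1)), n.choose i * semicircle R (X ^ i) := by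
        refine Finset.sum_subset (Finset.range_subset_range.2 (by lia)) fun i _ hi ↦ ?_
        rw [Nat.choose_eq_zero_of_lt (by simpa using hi), Nat.cast_zero, zero_mul]
    _ = ∑ k ∈ Finset.range (n + 1), (n.choose (2 * k) * catalan k : R) := by
        simp [sum_range_two_mul, semicircle_X_pow_two_mul, semicircle_X_pow_two_mul_add_one]

end Semicircle

section WronskianForm

variable {R : Type*} [CommRing R]

theorem wronskian_pow_pow (p : R[X]) (i j : ℕ) :
    wronskian (p ^ i) (p ^ j) = (j - i : R[X]) * p ^ (i + j - 1) * derivative p := by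
  obtain _ | i := i <;> obtain _ | j := j
  · simp [wronskian]
  · simp [wronskian, derivative_pow_succ]
  · simp [wronskian, derivative_pow_succ, ← neg_mul]
  · simp only [wronskian, derivative_pow_succ, map_add, map_natCast, map_one, Nat.cast_add_one,
      show i + 1 + (j + 1) - 1 = i + j + 1 by lia]
    ring

variable (R)

/-- The alternating form `(f, g) ↦ L ((2 + X) * (f * g' - f' * g))`, where `L` is the semicircle
functional; the matrix of the theorem consists of its values on the powers of `X + 1`. -/
noncomputable def wronskianForm : R[X] →ₗ[R] R[X] →ₗ[R] R :=
  (wronskianBilin R).compr₂ (semicircle R ∘ₗ LinearMap.mulLeft R (2 + X))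

variable {R} in
theorem wronskianForm_apply (f g : R[X]) :
    wronskianForm R f g = semicircle R ((2 + X) * wronskian f g) :=
  rfl

theorem isAlt_wronskianForm : (wronskianForm R).IsAlt := fun f ↦ by
  rw [wronskianForm_apply, wronskian_self_eq_zero, mul_zero, map_zero]

theorem wronskianForm_chebyshevV_apply (j k : ℤ) :
    wronskianForm R (chebyshevV R j) (chebyshevV R k) =
      (k - j) * semicircle R (Chebyshev.S R (j + k)) +
        (j + k + 1) * semicircle R (Chebyshev.S R (k - j - 1)) := by
  have expand : (2 + X) * wronskian (chebyshevV R j) (chebyshevV R k) =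
      (k - j) • Chebyshev.S R (j + k) + (j + k + 1) • Chebyshev.S R (k - j - 1) := by
    simp [two_add_X_mul_wronskian_chebyshevV]
  rw [wronskianForm_apply, expand, map_add, map_zsmul, map_zsmul, zsmul_eq_mul, zsmul_eq_mul]
  push_cast
  rfl

variable [IsAddTorsionFree R]

theorem wronskianForm_chebyshevV_of_add_one_lt {j k : ℕ} (hjk : j + 1 < k) :
    wronskianForm R (chebyshevV R j) (chebyshevV R k) = 0 := by
  rw [wronskianForm_chebyshevV_apply, semicircle_S_of_pos R (by lia),
    semicircle_S_of_pos R (by lia), mul_zero, mul_zero, add_zero]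

theorem wronskianForm_chebyshevV_add_one (j : ℕ) :
    wronskianForm R (chebyshevV R j) (chebyshevV R (j + 1)) = 2 * j + 2 := by
  rw [wronskianForm_chebyshevV_apply, semicircle_S_of_pos R (by lia), add_sub_cancel_left, sub_self,
    semicircle_S_zero]
  push_cast
  ring

end WronskianForm

section Motzkin

theorem semicircle_X_add_one_pow_eq_motzkin (n : ℕ) :
    semicircle ℚ ((X + 1) ^ n) = motzkin n := by
  rw [semicircle_X_add_one_pow, motzkin]
  refine Finset.sum_congr rfl fun k _ ↦ ?_
  have centralBinom_eq : ((k + 1 : ℕ) * catalan k : ℚ) = (2 * k).choose k := by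
    exact_mod_cast succ_mul_catalan_eq_centralBinom k
  rw [← centralBinom_eq]
  push_cast
  field_simp

theorem wronskianForm_X_add_one_pow (i j : ℕ) : wronskianForm ℚ ((X + 1) ^ i) ((X + 1) ^ j) =
    (j - i) * (motzkin (i + j - 1) + motzkin (i + j)) := by
  obtain h | h : i + j = 0 ∨ 1 ≤ i + j := by lia
  · obtain ⟨rfl, rfl⟩ : i = 0 ∧ j = 0 := by lia
    simpa using isAlt_wronskianForm ℚ 1
  · have expand : (2 + X) * wronskian ((X + 1 : ℚ[X]) ^ i) ((X + 1) ^ j) =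
        (j - i : ℚ) • ((X + 1) ^ (i + j - 1) + (X + 1) ^ (i + j)) := by
      rw [wronskian_pow_pow, ← Nat.sub_add_cancel h]
      simp only [add_tsub_cancel_right, derivative_add, derivative_X, derivative_one, add_zero,
        mul_one, smul_add, smul_eq_C_mul, map_sub, map_natCast]
      ring
    rw [wronskianForm_apply, expand, map_smul, map_add, semicircle_X_add_one_pow_eq_motzkin,
      semicircle_X_add_one_pow_eq_motzkin, smul_eq_mul]

end Motzkin

/-- For every positive integer `n`, the Pfaffian of the `2n × 2n` skew-symmetric
matrix with entries `(j-i)·(M_{i+j-3} + M_{i+j-2})` (1-based; here 0-based, so the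
entry at `(i,j)` is `(j-i)·(M_{i+j-1} + M_{i+j})`, the `(0,0)` entry being `0`)
equals `∏_{i=0}^{n-1} (4i+2)`. -/
theorem pfaffian_motzkin_sum (n : ℕ) (hn : 1 ≤ n) :
    pfaffian (N := n) (Matrix.of fun i j : Fin (2 * n) =>
        ((j.val : ℚ) - (i.val : ℚ)) *
          (motzkin (i.val + j.val - 1) + motzkin (i.val + j.val))) =
      ∏ i ∈ Finset.range n, (4 * (i : ℚ) + 2) := by
  calc _ = pfaffian (gramMatrix (wronskianForm ℚ) fun i : Fin (2 * n) ↦ (X + 1) ^ (i : ℕ)) := by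
        simp only [gramMatrix, wronskianForm_X_add_one_pow]
    _ = pfaffian (gramMatrix (wronskianForm ℚ) fun i : Fin (2 * n) ↦ X ^ (i : ℕ)) :=
        pfaffian_gramMatrix_of_monic (isAlt_wronskianForm ℚ) (fun i ↦ (monic_X_add_C 1).pow i)
          fun i ↦ natDegree_pow_X_add_C i 1
    _ = pfaffian (gramMatrix (wronskianForm ℚ) fun i : Fin (2 * n) ↦ chebyshevV ℚ (i : ℕ)) :=
        (pfaffian_gramMatrix_of_monic (isAlt_wronskianForm ℚ)
          (fun i ↦ (monic_chebyshevV_and_natDegree_eq ℚ i).1)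
          fun i ↦ (monic_chebyshevV_and_natDegree_eq ℚ i).2).symm
    _ = ∏ i : Fin n, wronskianForm ℚ (chebyshevV ℚ (2 * i : ℕ)) (chebyshevV ℚ (2 * i + 1 : ℕ)) := by
        refine (pfaffian_eq_prod_of_forall_eq_zero fun k l ↦
          wronskianForm_chebyshevV_of_add_one_lt ℚ).trans ?_
        simp [val_blockEquiv]
    _ = ∏ i ∈ Finset.range n, (4 * (i : ℚ) + 2) := by
        rw [Finset.prod_range]
        refine Finset.prod_congr rfl fun i _ ↦ ?_
        rw [Nat.cast_add_one, wronskianForm_chebyshevV_add_one]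
        push_cast
        ring
end
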